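/- Let X be drawn uniformly from the nonempty set 𝒢(n,m,d₁,d₂), with d₁ < m. Let a > 0 and let Q be an n×m real matrix, not identically zero, with all entries in [0,a]. Set f_Q(X) = Σ_{u∈[n], v∈[m]} Q_{uv}·X_{uv}, μ = (d₁/m)·Σ_{u,v} Q_{uv}, σ̃² = (d₁/m)·Σ_{u,v} Q_{uv}², p = 1 − d₁/m, and p′ = 1 − d₁/(m−d₁). Then for all t ≥ 0: ℙ( f_Q(X) − μ/p ≥ t ) ≤ exp( −(σ̃²/(3·p·a²))·h(p·a·t/σ̃²) ) and ℙ( f_Q(X) − p′·μ ≤ −t ) ≤ exp( −(σ̃²/(3·a²))·h(a·t/σ̃²) ), where h(x) = (1+x)·log(1+x) − x for x ≥ −1. -/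

import Mathlib

open scoped Classical BigOperators

noncomputable section

/-- The set of biadjacency matrices of `(n,m,d₁,d₂)`-bipartite biregular graphs. -/
def BBG (n m d₁ d₂ : ℕ) : Finset (Fin n → Fin m → Bool) :=
  Finset.univ.filter fun X =>
    (∀ u, (∑ v, if X u v then 1 else 0) = d₁) ∧
    (∀ v, (∑ u, if X u v then 1 else 0) = d₂)

/-- `h(x) = (1+x)·log(1+x) − x`. -/
def hfun (x : ℝ) : ℝ := (1 + x) * Real.log (1 + x) - x

/-- The linear function `f_Q(X) = Σ_{u,v} Q_{uv} X_{uv}`. -/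
def fQ {n m : ℕ} (Q : Matrix (Fin n) (Fin m) ℝ) (X : Fin n → Fin m → Bool) : ℝ :=
  ∑ u, ∑ v, Q u v * (if X u v then (1 : ℝ) else 0)

/-!
Let `f = ∑ q c X c` be the linear function and `S` a uniformly random switching: it exchanges the
values `0` and `1` along a closed rook path of a biregular matrix on which these values alternate.
For a cell `c`, the pairs consisting of a matrix containing `c` and a switching that produced it
correspond to the pairs consisting of a matrix without `c` and a switching that inserts `c`. Both
numbers of switchings at a given matrix are nearly constant, so `E[f w(X)]` is comparable, up to
explicit factors, with `E[∑ q c w(X with c inserted by S)]` for every weight `w`. A switching raises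
`f` by at most the sum of `q` over the inserted cells, so for `w = exp (θ f)` this bounds the
logarithmic derivative of the moment generating function; integrating it and optimising over `θ` in
Chernoff's inequality gives the tails.

Rook paths with four cells (indexed by `ℤ/2`) have a good lower bound on the number of switchings
producing a given cell and yield the upper tail; those with six cells (indexed by `ℤ/3`) have a good
lower bound on the number of switchings inserting a given cell and yield the lower tail. A multiple
`L * X c` is added to both sides of the count for steps fixing a matrix that contains `c`;
with a suitable `L` it evens out the counts between the matrices with and without `c`.
-/

section Chernoff

variable {Ω : Type*} {s : Finset Ω} {g : Ω → ℝ} {a b v c t θ : ℝ}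

lemma sum_exp_mul_le_card_mul_exp {ψ ψ' : ℝ → ℝ} (hψ : ∀ θ, HasDerivAt ψ (ψ' θ) θ)
    (hψ0 : ψ 0 = 0)
    (hg : ∀ θ, 0 ≤ θ →
      ∑ i ∈ s, g i * Real.exp (θ * g i) ≤ ψ' θ * ∑ i ∈ s, Real.exp (θ * g i))
    (hθ : 0 ≤ θ) :
    ∑ i ∈ s, Real.exp (θ * g i) ≤ s.card * Real.exp (ψ θ) := by
  set F : ℝ → ℝ := fun θ => (∑ i ∈ s, Real.exp (θ * g i)) * Real.exp (-ψ θ) with hF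
  have hderiv (θ : ℝ) : HasDerivAt F
      ((∑ i ∈ s, g i * Real.exp (θ * g i)) * Real.exp (-ψ θ) +
        (∑ i ∈ s, Real.exp (θ * g i)) * (Real.exp (-ψ θ) * -ψ' θ)) θ := by
    refine (HasDerivAt.fun_sum fun i _ => ?_).mul (hψ θ).neg.exp
    simpa [mul_comm] using ((hasDerivAt_id θ).mul_const (g i)).exp
  have hanti : AntitoneOn F (Set.Ici 0) := by
    refine antitoneOn_of_deriv_nonpos (convex_Ici 0)
      (fun θ _ => (hderiv θ).continuousAt.continuousWithinAt)
      (fun θ _ => (hderiv θ).differentiableAt.differentiableWithinAt) fun θ hθ => ?_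
    rw [interior_Ici] at hθ
    rw [(hderiv θ).deriv]
    linarith [mul_le_mul_of_nonneg_right (hg θ hθ.le) (Real.exp_pos (-ψ θ)).le]
  have hF0 : F 0 = s.card := by simp [hF, hψ0]
  have hFθ : F θ ≤ s.card := hF0 ▸ hanti Set.self_mem_Ici hθ hθ
  rwa [← div_le_iff₀ (Real.exp_pos _), div_eq_mul_inv, ← Real.exp_neg]

lemma card_filter_mul_exp_le_sum_exp (hθ : 0 ≤ θ) :
    ((s.filter fun i => b ≤ g i).card : ℝ) * Real.exp (θ * b) ≤
      ∑ i ∈ s, Real.exp (θ * g i) :=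
  calc ((s.filter fun i => b ≤ g i).card : ℝ) * Real.exp (θ * b)
      = ∑ i ∈ s with b ≤ g i, Real.exp (θ * b) := by rw [Finset.sum_const, nsmul_eq_mul]
    _ ≤ ∑ i ∈ s with b ≤ g i, Real.exp (θ * g i) := by
        refine Finset.sum_le_sum fun i hi => Real.exp_le_exp.2 ?_
        exact mul_le_mul_of_nonneg_left (Finset.mem_filter.1 hi).2 hθ
    _ ≤ ∑ i ∈ s, Real.exp (θ * g i) :=
        Finset.sum_le_sum_of_subset_of_nonneg (Finset.filter_subset _ _)
          fun i _ _ => (Real.exp_pos _).le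

lemma card_filter_div_card_le_exp {ψ ψ' : ℝ → ℝ} (hs : s.Nonempty)
    (hψ : ∀ θ, HasDerivAt ψ (ψ' θ) θ) (hψ0 : ψ 0 = 0)
    (hg : ∀ θ, 0 ≤ θ →
      ∑ i ∈ s, g i * Real.exp (θ * g i) ≤ ψ' θ * ∑ i ∈ s, Real.exp (θ * g i))
    (hθ : 0 ≤ θ) :
    ((s.filter fun i => b ≤ g i).card : ℝ) / s.card ≤ Real.exp (ψ θ - θ * b) := by
  have hcard : (0 : ℝ) < s.card := by exact_mod_cast hs.card_pos
  rw [div_le_iff₀' hcard, Real.exp_sub, ← mul_div_assoc, le_div_iff₀ (Real.exp_pos _)]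
  exact (card_filter_mul_exp_le_sum_exp hθ).trans (sum_exp_mul_le_card_mul_exp hψ hψ0 hg hθ)

lemma card_filter_div_card_le_exp_hfun (hs : s.Nonempty) (hv : 0 < v) (hc : 0 < c)
    (hg : ∀ θ, 0 ≤ θ → ∑ i ∈ s, g i * Real.exp (θ * g i) ≤
      (b + v * (Real.exp (c * θ) - 1)) * ∑ i ∈ s, Real.exp (θ * g i))
    (ht : 0 ≤ t) :
    ((s.filter fun i => b + t ≤ g i).card : ℝ) / s.card ≤
      Real.exp (-(v / c) * hfun (t / v)) := by
  have hψ (θ : ℝ) : HasDerivAt (fun θ => b * θ + v / c * (Real.exp (c * θ) - 1 - c * θ))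
      (b + v * (Real.exp (c * θ) - 1)) θ := by
    have hlin := (hasDerivAt_id θ).const_mul c
    refine (((hasDerivAt_id θ).const_mul b).add
      (((hlin.exp.sub_const 1).sub hlin).const_mul (v / c))).congr_deriv ?_
    simp only [id_eq]
    field_simp
  have hx : 0 ≤ t / v := by positivity
  -- `θ = log (1 + t / v) / c` minimises `v / c * (exp (c θ) - 1 - c θ) - θ t`.
  have hθ : 0 ≤ Real.log (1 + t / v) / c := div_nonneg (Real.log_nonneg (by linarith)) hc.le
  refine (card_filter_div_card_le_exp hs hψ (by simp) hg hθ).trans_eq (congrArg Real.exp ?_)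
  rw [mul_div_cancel₀ _ hc.ne', Real.exp_log (by linarith), hfun]
  field_simp
  ring

lemma card_filter_div_card_le_exp_neg_sq (hs : s.Nonempty) (hv : 0 < v)
    (hg : ∀ θ, 0 ≤ θ → ∑ i ∈ s, g i * Real.exp (θ * g i) ≤
      (b + v * θ) * ∑ i ∈ s, Real.exp (θ * g i))
    (ht : 0 ≤ t) :
    ((s.filter fun i => b + t ≤ g i).card : ℝ) / s.card ≤ Real.exp (-(t ^ 2 / (2 * v))) := by
  have hψ (θ : ℝ) : HasDerivAt (fun θ => b * θ + v * (θ ^ 2 / 2)) (b + v * θ) θ := by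
    refine (((hasDerivAt_id θ).const_mul b).add
      (((hasDerivAt_pow 2 θ).div_const 2).const_mul v)).congr_deriv ?_
    simp
  have hθ : 0 ≤ t / v := by positivity
  refine (card_filter_div_card_le_exp hs hψ (by simp) hg hθ).trans_eq (congrArg Real.exp ?_)
  field_simp
  ring

lemma hfun_nonneg {x : ℝ} (hx : 0 ≤ x) : 0 ≤ hfun x := by
  have hpos : 0 < 1 + x := by linarith
  have hlog : 1 - (1 + x)⁻¹ ≤ Real.log (1 + x) := Real.one_sub_inv_le_log_of_pos hpos
  have hmul := mul_le_mul_of_nonneg_left hlog hpos.le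
  rw [mul_sub, mul_inv_cancel₀ hpos.ne'] at hmul
  unfold hfun
  linarith

lemma hfun_le_sq_div_two {x : ℝ} (hx : 0 ≤ x) : hfun x ≤ x ^ 2 / 2 := by
  set l := Real.log (1 + x)
  have hexp : 1 + l + l ^ 2 / 2 ≤ 1 + x := by
    rw [← Real.exp_log (show 0 < 1 + x by linarith)]
    exact Real.quadratic_le_exp_of_nonneg (Real.log_nonneg (by linarith))
  unfold hfun
  nlinarith [sq_nonneg (x - l)]

lemma div_mul_hfun_le_sq_div (ha : 0 < a) (hv : 0 < v) (ht : 0 ≤ t) :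
    v / (3 * a ^ 2) * hfun (a * t / v) ≤ t ^ 2 / (6 * v) :=
  calc v / (3 * a ^ 2) * hfun (a * t / v)
      ≤ v / (3 * a ^ 2) * ((a * t / v) ^ 2 / 2) := by
        gcongr
        exact hfun_le_sq_div_two (by positivity)
    _ = t ^ 2 / (6 * v) := by field_simp; ring

lemma exp_mul_le_one_add {y B : ℝ} (hy : 0 ≤ y) (hyB : y ≤ B) (hB : 0 < B) :
    Real.exp (θ * y) ≤ 1 + y * ((Real.exp (θ * B) - 1) / B) := by
  have hconv := convexOn_exp.2 (Set.mem_univ 0) (Set.mem_univ (θ * B))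
    (sub_nonneg.2 ((div_le_one hB).2 hyB)) (div_nonneg hy hB.le) (sub_add_cancel 1 (y / B))
  simp only [smul_eq_mul, mul_zero, zero_add, Real.exp_zero, mul_one] at hconv
  calc Real.exp (θ * y) = Real.exp (y / B * (θ * B)) := by congr 1; field_simp
    _ ≤ 1 - y / B + y / B * Real.exp (θ * B) := hconv
    _ = 1 + y * ((Real.exp (θ * B) - 1) / B) := by ring

end Chernoff

section Switching

variable {α β ι : Type*}

/-- The indicator of the cell `c` of a Boolean matrix, as a real number. A matrix with index types
`α`, `β` is handled as a function on the cells `α × β`. -/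
def entry (X : α → β → Bool) (c : α × β) : ℝ := if X c.1 c.2 then 1 else 0

/-- The matrix obtained from `X` by negating the cells in `S`. -/
def toggle (S : Set (α × β)) (X : α → β → Bool) : α → β → Bool :=
  fun u v => xor (X u v) (decide ((u, v) ∈ S))

/-- The weight of `x` being `0` on the cells `p i` and `1` on the cells `q i`: for a `0`-`1` matrix
it is the indicator of this event. -/
def alternation [Fintype ι] (x : α × β → ℝ) (p q : ι → α × β) : ℝ :=
  ∏ i, (1 - x (p i)) * x (q i)

/-- The remaining cells of the closed rook path through the cells `e i`, which turns from the row
of `e i` into the column of `e (i + g)`. For `g = 1` in `ℤ/2` and `ℤ/3` this gives the simple and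
the hexagonal switchings. -/
def crossing [Add ι] (g : ι) (e : ι → α × β) : ι → α × β :=
  fun i => ((e i).1, (e (i + g)).2)

/-- The switching along the closed rook path through the cells `e i`. It is used on matrices that
alternate along the path, where it exchanges the values `0` and `1`. -/
def switch [Add ι] (g : ι) (e : ι → α × β) : (α → β → Bool) → α → β → Bool :=
  toggle (Set.range e ∪ Set.range (crossing g e))

variable {X : α → β → Bool} {S : Set (α × β)} {c : α × β}

lemma entry_nonneg (X : α → β → Bool) (c : α × β) : 0 ≤ entry X c := by
  unfold entry; split_ifs <;> norm_num

lemma entry_le_one (X : α → β → Bool) (c : α × β) : entry X c ≤ 1 := by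
  unfold entry; split_ifs <;> norm_num

lemma toggle_toggle (S : Set (α × β)) (X : α → β → Bool) : toggle S (toggle S X) = X := by
  ext; simp [toggle]

lemma entry_toggle_of_mem (hc : c ∈ S) : entry (toggle S X) c = 1 - entry X c := by
  cases h : X c.1 c.2 <;> simp [entry, toggle, hc, h]

lemma entry_toggle_of_notMem (hc : c ∉ S) : entry (toggle S X) c = entry X c := by
  simp [entry, toggle, hc]

lemma crossing_neg_crossing [AddGroup ι] (g : ι) (e : ι → α × β) :
    crossing (-g) (crossing g e) = e := by
  ext i <;> simp [crossing]

lemma switch_neg_crossing [AddGroup ι] (g : ι) (e : ι → α × β) :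
    switch (-g) (crossing g e) = switch (α := α) (β := β) g e := by
  rw [switch, switch, crossing_neg_crossing, Set.union_comm]

variable [Fintype ι] {p q : ι → α × β}

lemma alternation_nonneg {x : α × β → ℝ} (h0 : ∀ c, 0 ≤ x c) (h1 : ∀ c, x c ≤ 1)
    (p q : ι → α × β) : 0 ≤ alternation x p q :=
  Finset.prod_nonneg fun _ _ => mul_nonneg (sub_nonneg.2 (h1 _)) (h0 _)

lemma alternation_entry_ne_zero_iff :
    alternation (entry X) p q ≠ 0 ↔
      ∀ i, X (p i).1 (p i).2 = false ∧ X (q i).1 (q i).2 = true := by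
  simp only [alternation, Finset.prod_ne_zero_iff, Finset.mem_univ, true_imp_iff]
  refine forall_congr' fun i => ?_
  cases hp : X (p i).1 (p i).2 <;> cases hq : X (q i).1 (q i).2 <;> simp [entry, hp, hq]

lemma alternation_toggle (hp : ∀ i, p i ∈ S) (hq : ∀ i, q i ∈ S) :
    alternation (entry (toggle S X)) p q = alternation (entry X) q p := by
  refine Finset.prod_congr rfl fun i _ => ?_
  rw [entry_toggle_of_mem (hp i), entry_toggle_of_mem (hq i)]
  ring

lemma alternation_switch [Add ι] (g : ι) (e : ι → α × β) :
    alternation (entry (switch g e X)) e (crossing g e) =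
      alternation (entry X) (crossing g e) e :=
  alternation_toggle (fun _ => Or.inl ⟨_, rfl⟩) fun _ => Or.inr ⟨_, rfl⟩

lemma alternation_crossing_switch [Add ι] (g : ι) (e : ι → α × β) :
    alternation (entry (switch g e X)) (crossing g e) e =
      alternation (entry X) e (crossing g e) :=
  alternation_toggle (fun _ => Or.inr ⟨_, rfl⟩) fun _ => Or.inl ⟨_, rfl⟩

lemma alternation_comp_add_right [AddCommGroup ι] (x : α × β → ℝ) (g j : ι) (e : ι → α × β) :
    alternation x (fun i => e (i + j)) (crossing g fun i => e (i + j)) =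
      alternation x e (crossing g e) := by
  simp only [alternation, crossing, add_right_comm _ g j]
  exact Equiv.prod_comp (Equiv.addRight j) fun i => (1 - x (e i)) * x ((e i).1, (e (i + g)).2)

/-- In `ℤ/2` and `ℤ/3` any two cells of the path are consecutive, so alternation alone rules out
degenerate paths. -/
lemma injective_of_alternation_ne_zero [AddCommGroup ι] {g : ι}
    (hg : ∀ i, i = 0 ∨ i = g ∨ i = -g) {e : ι → α × β}
    (h : alternation (entry X) e (crossing g e) ≠ 0) :
    Function.Injective e ∧ Function.Injective (crossing g e) := by
  rw [alternation_entry_ne_zero_iff] at h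
  have hne (i j) : crossing g e i ≠ e j := fun hij => by
    have hi := (h i).2
    rw [hij, (h j).1] at hi
    exact Bool.false_ne_true hi
  have consecutive {i j : ι} (hij : i ≠ j) : j = i + g ∨ i = j + g := by
    rcases hg (j - i) with h0 | h1 | h2
    · exact absurd (sub_eq_zero.1 h0).symm hij
    · exact Or.inl (sub_eq_iff_eq_add'.1 h1)
    · exact Or.inr (by rw [← neg_sub, neg_inj] at h2; exact sub_eq_iff_eq_add'.1 h2)
  constructor <;> intro i j hij <;> by_contra hne'
  · have hcol : (e i).2 = (e j).2 := congrArg Prod.snd hij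
    rcases consecutive hne' with rfl | rfl
    · exact hne i i (Prod.ext rfl hcol.symm)
    · exact hne j j (Prod.ext rfl hcol)
  · have hrow : (e i).1 = (e j).1 := by simpa [crossing] using congrArg Prod.fst hij
    rcases consecutive hne' with rfl | rfl
    · exact hne i _ (Prod.ext hrow rfl)
    · exact hne j _ (Prod.ext hrow.symm rfl)

lemma sum_ite_eq_indicator_range (hp : Function.Injective p) (c : α × β) :
    ∑ i, (if p i = c then (1 : ℝ) else 0) = (Set.range p).indicator 1 c := by
  by_cases hc : c ∈ Set.range p
  · obtain ⟨j, rfl⟩ := hc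
    simp [hp.eq_iff]
  · rw [Set.indicator_of_notMem hc]
    exact Finset.sum_eq_zero fun i _ => if_neg fun hi => hc ⟨i, hi⟩

lemma entry_toggle_range_union (hp : Function.Injective p) (hq : Function.Injective q)
    (h : alternation (entry X) p q ≠ 0) (c : α × β) :
    entry (toggle (Set.range p ∪ Set.range q) X) c =
      entry X c + ∑ i, (if p i = c then 1 else 0) - ∑ i, (if q i = c then 1 else 0) := by
  rw [alternation_entry_ne_zero_iff] at h
  rw [sum_ite_eq_indicator_range hp, sum_ite_eq_indicator_range hq]
  have hXp (hc : c ∈ Set.range p) : entry X c = 0 := by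
    obtain ⟨i, rfl⟩ := hc; simp [entry, (h i).1]
  have hXq (hc : c ∈ Set.range q) : entry X c = 1 := by
    obtain ⟨i, rfl⟩ := hc; simp [entry, (h i).2]
  by_cases hcp : c ∈ Set.range p <;> by_cases hcq : c ∈ Set.range q
  · exact absurd ((hXp hcp).symm.trans (hXq hcq)) zero_ne_one
  · rw [entry_toggle_of_mem (Or.inl hcp), hXp hcp, Set.indicator_of_mem hcp,
      Set.indicator_of_notMem hcq, Pi.one_apply]
    ring
  · rw [entry_toggle_of_mem (Or.inr hcq), hXq hcq, Set.indicator_of_notMem hcp,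
      Set.indicator_of_mem hcq, Pi.one_apply]
    ring
  · rw [entry_toggle_of_notMem (not_or.2 ⟨hcp, hcq⟩), Set.indicator_of_notMem hcp,
      Set.indicator_of_notMem hcq]
    ring

lemma entry_switch [AddCommGroup ι] {g : ι} (hg : ∀ i, i = 0 ∨ i = g ∨ i = -g)
    {e : ι → α × β} (h : alternation (entry X) e (crossing g e) ≠ 0) (c : α × β) :
    entry (switch g e X) c = entry X c + ∑ i, (if e i = c then 1 else 0) -
      ∑ i, (if crossing g e i = c then 1 else 0) :=
  have ⟨he, hcross⟩ := injective_of_alternation_ne_zero hg h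
  entry_toggle_range_union he hcross h c

end Switching

section Counting

variable {α β ι : Type*} [Fintype α] [Fintype β]

/-- A real matrix with row sums `d₁`, column sums `d₂` and entries in `[0, 1]`: a fractional
biregular bipartite graph. The graphs themselves are the case of entries `0` and `1`. -/
structure IsBiregular (x : α × β → ℝ) (d₁ d₂ : ℝ) : Prop where
  nonneg : ∀ c, 0 ≤ x c
  le_one : ∀ c, x c ≤ 1
  row_sum : ∀ u, ∑ v, x (u, v) = d₁
  col_sum : ∀ v, ∑ u, x (u, v) = d₂

lemma mem_BBG_iff {n m d₁ d₂ : ℕ} {X : Fin n → Fin m → Bool} :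
    X ∈ BBG n m d₁ d₂ ↔ IsBiregular (entry X) d₁ d₂ := by
  simp only [BBG, Finset.mem_filter, Finset.mem_univ, true_and]
  constructor
  · rintro ⟨hrow, hcol⟩
    exact ⟨entry_nonneg X, entry_le_one X, fun u => by simp [← hrow u, entry],
      fun v => by simp [← hcol v, entry]⟩
  · intro h
    have hrow := h.row_sum
    have hcol := h.col_sum
    simp only [entry] at hrow hcol
    exact ⟨fun u => by exact_mod_cast hrow u, fun v => by exact_mod_cast hcol v⟩

lemma IsBiregular.entry_switch [Fintype ι] [AddCommGroup ι] {g : ι}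
    (hg : ∀ i, i = 0 ∨ i = g ∨ i = -g) {e : ι → α × β} {X : α → β → Bool} {d₁ d₂ : ℝ}
    (hX : IsBiregular (entry X) d₁ d₂) (h : alternation (entry X) e (crossing g e) ≠ 0) :
    IsBiregular (entry (switch g e X)) d₁ d₂ := by
  have row_count (p : ι → α × β) (u : α) :
      ∑ v, ∑ i, (if p i = (u, v) then (1 : ℝ) else 0) = ∑ i, if (p i).1 = u then 1 else 0 := by
    rw [Finset.sum_comm]
    refine Finset.sum_congr rfl fun i _ => ?_
    by_cases hu : (p i).1 = u <;> simp [Prod.ext_iff, hu]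
  have col_count (p : ι → α × β) (v : β) :
      ∑ u, ∑ i, (if p i = (u, v) then (1 : ℝ) else 0) = ∑ i, if (p i).2 = v then 1 else 0 := by
    rw [Finset.sum_comm]
    refine Finset.sum_congr rfl fun i _ => ?_
    by_cases hv : (p i).2 = v <;> simp [Prod.ext_iff, hv]
  refine ⟨entry_nonneg _, entry_le_one _, fun u => ?_, fun v => ?_⟩ <;>
    simp only [_root_.entry_switch hg h, Finset.sum_sub_distrib, Finset.sum_add_distrib]
  · rw [hX.row_sum, row_count, row_count]
    exact add_sub_cancel_right _ _
  · rw [hX.col_sum, col_count, col_count]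
    have hshift : ∑ i, (if (crossing g e i).2 = v then (1 : ℝ) else 0) =
        ∑ i, if (e i).2 = v then 1 else 0 :=
      Equiv.sum_comp (Equiv.addRight g) fun i => if (e i).2 = v then (1 : ℝ) else 0
    rw [hshift, add_sub_cancel_right]

/-- The number of switchings `e` of `x` that insert the cell `c = e 0`. -/
def insertionCount [Fintype ι] [DecidableEq ι] [AddCommGroup ι] (g : ι) (x : α × β → ℝ)
    (c : α × β) : ℝ :=
  ∑ e : ι → α × β with e 0 = c, alternation x e (crossing g e)

/-- The number of switchings `e` leading to `x` that inserted the cell `c = e 0`; undoing such a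
switching deletes `c` from `x`. -/
def deletionCount [Fintype ι] [DecidableEq ι] [AddCommGroup ι] (g : ι) (x : α × β → ℝ)
    (c : α × β) : ℝ :=
  ∑ e : ι → α × β with e 0 = c, alternation x (crossing g e) e

lemma sum_filter_apply_zero_eq {k : ℕ} (c : α × β) (F : (Fin (k + 1) → α × β) → ℝ) :
    ∑ e with e 0 = c, F e = ∑ t, F (Matrix.vecCons c t) := by
  rw [Finset.sum_filter, ← Equiv.sum_comp (Fin.consEquiv fun _ => α × β), Fintype.sum_prod_type]
  simp [Matrix.vecCons, Fin.consEquiv]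

lemma sum_fin_one_fun {C : Type*} [Fintype C] (F : (Fin 1 → C) → ℝ) :
    ∑ t, F t = ∑ f, F ![f] :=
  (Equiv.sum_comp (Equiv.funUnique (Fin 1) C).symm F).symm.trans <|
    Finset.sum_congr rfl fun f _ => congrArg F (by ext i; simp)

lemma sum_fin_two_fun {C : Type*} [Fintype C] (F : (Fin 2 → C) → ℝ) :
    ∑ t, F t = ∑ f, ∑ k, F ![f, k] := by
  rw [← Equiv.sum_comp (finTwoArrowEquiv C).symm, Fintype.sum_prod_type]
  rfl

lemma insertionCount_fin_two (x : α × β → ℝ) (c : α × β) :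
    insertionCount (1 : Fin 2) x c =
      ∑ f, (1 - x c) * (1 - x f) * (x (c.1, f.2) * x (f.1, c.2)) := by
  refine (sum_filter_apply_zero_eq c _).trans ?_
  rw [sum_fin_one_fun]
  refine Finset.sum_congr rfl fun f _ => ?_
  rw [alternation, Fin.prod_univ_two]
  change (1 - x c) * x (c.1, f.2) * ((1 - x f) * x (f.1, c.2)) = _
  ring

lemma deletionCount_fin_two (x : α × β → ℝ) (c : α × β) :
    deletionCount (1 : Fin 2) x c =
      ∑ f, x c * ((1 - x (c.1, f.2)) * (1 - x (f.1, c.2)) * x f) := by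
  refine (sum_filter_apply_zero_eq c _).trans ?_
  rw [sum_fin_one_fun]
  refine Finset.sum_congr rfl fun f _ => ?_
  rw [alternation, Fin.prod_univ_two]
  change (1 - x (c.1, f.2)) * x c * ((1 - x (f.1, c.2)) * x f) = _
  ring

lemma sum_sum_prod_comm (F : α → β → α → β → ℝ) :
    ∑ f : α × β, ∑ k : α × β, F f.1 f.2 k.1 k.2 =
      ∑ k : α × β, ∑ f : α × β, F f.1 k.2 k.1 f.2 := by
  simp only [Fintype.sum_prod_type]
  rw [Finset.sum_congr rfl fun u _ => Finset.sum_comm, Finset.sum_comm]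
  exact Finset.sum_congr rfl fun u' _ => Finset.sum_comm

lemma insertionCount_fin_three (x : α × β → ℝ) (c : α × β) :
    insertionCount (1 : Fin 3) x c =
      ∑ k : α × β, x (c.1, k.2) * x (k.1, c.2) * ((1 - x c) *
        ∑ f : α × β, (1 - x (k.1, f.2)) * (1 - x (f.1, k.2)) * x f) := by
  refine (sum_filter_apply_zero_eq c _).trans ?_
  rw [sum_fin_two_fun]
  refine (sum_sum_prod_comm fun u v u' v' =>
    alternation x ![c, (u, v), (u', v')] (crossing 1 ![c, (u, v), (u', v')])).trans ?_
  refine Finset.sum_congr rfl fun k _ => ?_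
  simp only [Finset.mul_sum]
  refine Finset.sum_congr rfl fun f _ => ?_
  rw [alternation, Fin.prod_univ_three]
  change (1 - x c) * x (c.1, k.2) * ((1 - x (f.1, k.2)) * x (f.1, f.2)) *
    ((1 - x (k.1, f.2)) * x (k.1, c.2)) = _
  ring

lemma deletionCount_fin_three (x : α × β → ℝ) (c : α × β) :
    deletionCount (1 : Fin 3) x c =
      ∑ f : α × β, ∑ k : α × β, x c * (((1 - x (c.1, f.2)) * x f) * ((1 - x (k.1, c.2)) * x k)) *
        (1 - x (f.1, k.2)) := by
  refine (sum_filter_apply_zero_eq c _).trans ?_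
  rw [sum_fin_two_fun]
  refine Finset.sum_congr rfl fun f _ => Finset.sum_congr rfl fun k _ => ?_
  rw [alternation, Fin.prod_univ_three]
  change (1 - x (c.1, f.2)) * x c * ((1 - x (f.1, k.2)) * x f) * ((1 - x (k.1, c.2)) * x k) = _
  ring

namespace IsBiregular

variable {x : α × β → ℝ} {d₁ d₂ : ℝ}

lemma sum_snd_mul (hx : IsBiregular x d₁ d₂) (f : β → ℝ) :
    ∑ c, f c.2 * x c = (∑ v, f v) * d₂ := by
  simp only [Fintype.sum_prod_type_right, ← Finset.mul_sum, hx.col_sum, Finset.sum_mul]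

lemma sum_fst_mul (hx : IsBiregular x d₁ d₂) (f : α → ℝ) :
    ∑ c, f c.1 * x c = (∑ u, f u) * d₁ := by
  simp only [Fintype.sum_prod_type, ← Finset.mul_sum, hx.row_sum, Finset.sum_mul]

lemma sum_eq (hx : IsBiregular x d₁ d₂) : ∑ c, x c = Fintype.card β * d₂ := by
  simpa using hx.sum_snd_mul fun _ => 1

lemma card_mul_eq (hx : IsBiregular x d₁ d₂) :
    (Fintype.card α * d₁ : ℝ) = Fintype.card β * d₂ := by
  rw [← hx.sum_eq]
  simpa using (hx.sum_fst_mul fun _ => 1).symm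

lemma sum_cross (hx : IsBiregular x d₁ d₂) (c : α × β) :
    ∑ k : α × β, x (c.1, k.2) * x (k.1, c.2) = d₁ * d₂ := by
  rw [Fintype.sum_prod_type_right]
  simp only [← Finset.mul_sum, ← Finset.sum_mul, hx.col_sum, hx.row_sum]

lemma sum_one_sub_row_mul (hx : IsBiregular x d₁ d₂) (u : α) :
    ∑ f, (1 - x (u, f.2)) * x f = d₂ * (Fintype.card β - d₁) := by
  rw [hx.sum_snd_mul fun v => 1 - x (u, v), Finset.sum_sub_distrib, hx.row_sum]
  simp [mul_comm]

lemma sum_one_sub_col_mul (hx : IsBiregular x d₁ d₂) (v : β) :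
    ∑ f, (1 - x (f.1, v)) * x f = d₂ * (Fintype.card β - d₁) := by
  rw [hx.sum_fst_mul fun u => 1 - x (u, v), Finset.sum_sub_distrib, hx.col_sum]
  simp only [Finset.sum_const, Finset.card_univ, nsmul_eq_mul, mul_one]
  linarith [hx.card_mul_eq]

lemma le_sum_one_sub_mul (hx : IsBiregular x d₁ d₂) (c : α × β) :
    Fintype.card β * d₂ - 2 * (d₁ * d₂) ≤
      ∑ f, (1 - x (c.1, f.2)) * (1 - x (f.1, c.2)) * x f :=
  calc Fintype.card β * d₂ - 2 * (d₁ * d₂)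
      = ∑ f, ((1 - x (c.1, f.2)) * x f + (1 - x (f.1, c.2)) * x f - x f) := by
        rw [Finset.sum_sub_distrib, Finset.sum_add_distrib, hx.sum_one_sub_row_mul,
          hx.sum_one_sub_col_mul, hx.sum_eq]
        ring
    _ ≤ ∑ f, (1 - x (c.1, f.2)) * (1 - x (f.1, c.2)) * x f := by
        refine Finset.sum_le_sum fun f _ => ?_
        have := mul_nonneg (mul_nonneg (hx.nonneg (c.1, f.2)) (hx.nonneg (f.1, c.2))) (hx.nonneg f)
        linarith

lemma sum_one_sub_mul_nonneg (hx : IsBiregular x d₁ d₂) (c : α × β) :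
    0 ≤ ∑ f, (1 - x (c.1, f.2)) * (1 - x (f.1, c.2)) * x f :=
  Finset.sum_nonneg fun f _ => mul_nonneg
    (mul_nonneg (sub_nonneg.2 (hx.le_one _)) (sub_nonneg.2 (hx.le_one _))) (hx.nonneg f)

lemma sum_one_sub_mul_le (hx : IsBiregular x d₁ d₂) (c : α × β) :
    ∑ f, (1 - x (c.1, f.2)) * (1 - x (f.1, c.2)) * x f ≤ d₂ * (Fintype.card β - d₁) := by
  rw [← hx.sum_one_sub_row_mul c.1]
  refine Finset.sum_le_sum fun f _ => mul_le_mul_of_nonneg_right ?_ (hx.nonneg f)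
  exact mul_le_of_le_one_right (sub_nonneg.2 (hx.le_one _)) (sub_le_self _ (hx.nonneg _))

lemma insertionCount_fin_two_le (hx : IsBiregular x d₁ d₂) (c : α × β) :
    insertionCount (1 : Fin 2) x c ≤ (1 - x c) * (d₁ * d₂) := by
  rw [insertionCount_fin_two, ← hx.sum_cross c, Finset.mul_sum]
  refine Finset.sum_le_sum fun f _ => mul_le_mul_of_nonneg_right ?_
    (mul_nonneg (hx.nonneg _) (hx.nonneg _))
  exact mul_le_of_le_one_right (sub_nonneg.2 (hx.le_one _)) (sub_le_self _ (hx.nonneg _))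

lemma le_deletionCount_fin_two (hx : IsBiregular x d₁ d₂) (c : α × β) :
    x c * (Fintype.card β * d₂ - 2 * (d₁ * d₂)) ≤ deletionCount (1 : Fin 2) x c := by
  rw [deletionCount_fin_two, ← Finset.mul_sum]
  exact mul_le_mul_of_nonneg_left (hx.le_sum_one_sub_mul c) (hx.nonneg c)

lemma insertionCount_fin_three_le (hx : IsBiregular x d₁ d₂) (c : α × β) :
    insertionCount (1 : Fin 3) x c ≤ d₁ * d₂ * (d₂ * (Fintype.card β - d₁)) := by
  rw [insertionCount_fin_three, ← hx.sum_cross c, Finset.sum_mul]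
  refine Finset.sum_le_sum fun k _ => mul_le_mul_of_nonneg_left ?_
    (mul_nonneg (hx.nonneg _) (hx.nonneg _))
  exact (mul_le_of_le_one_left (hx.sum_one_sub_mul_nonneg k) (sub_le_self _ (hx.nonneg c))).trans
    (hx.sum_one_sub_mul_le k)

lemma le_insertionCount_fin_three (hx : IsBiregular x d₁ d₂) (c : α × β) :
    (1 - x c) * (d₁ * d₂ * (Fintype.card β * d₂ - 2 * (d₁ * d₂))) ≤
      insertionCount (1 : Fin 3) x c := by
  rw [insertionCount_fin_three, mul_left_comm, ← hx.sum_cross c, Finset.sum_mul]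
  refine Finset.sum_le_sum fun k _ => mul_le_mul_of_nonneg_left ?_
    (mul_nonneg (hx.nonneg _) (hx.nonneg _))
  exact mul_le_mul_of_nonneg_left (hx.sum_cross c ▸ hx.le_sum_one_sub_mul k)
    (sub_nonneg.2 (hx.le_one c))

lemma deletionCount_fin_three_le (hx : IsBiregular x d₁ d₂) (c : α × β) :
    deletionCount (1 : Fin 3) x c ≤ x c * (d₂ * (Fintype.card β - d₁)) ^ 2 := by
  have hrow (f : α × β) : 0 ≤ (1 - x (c.1, f.2)) * x f :=
    mul_nonneg (sub_nonneg.2 (hx.le_one _)) (hx.nonneg f)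
  have hcol (k : α × β) : 0 ≤ (1 - x (k.1, c.2)) * x k :=
    mul_nonneg (sub_nonneg.2 (hx.le_one _)) (hx.nonneg k)
  calc deletionCount (1 : Fin 3) x c
      ≤ ∑ f : α × β, ∑ k : α × β,
          x c * (((1 - x (c.1, f.2)) * x f) * ((1 - x (k.1, c.2)) * x k)) := by
        rw [deletionCount_fin_three]
        exact Finset.sum_le_sum fun f _ => Finset.sum_le_sum fun k _ => mul_le_of_le_one_right
          (mul_nonneg (hx.nonneg c) (mul_nonneg (hrow f) (hcol k))) (sub_le_self _ (hx.nonneg _))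
    _ = x c * (d₂ * (Fintype.card β - d₁)) ^ 2 := by
        rw [sq]
        nth_rw 1 [← hx.sum_one_sub_row_mul c.1]
        rw [← hx.sum_one_sub_col_mul c.2, Finset.sum_mul_sum]
        simp only [Finset.mul_sum]

end IsBiregular

end Counting

section Exchange

variable {α β ι : Type*} [Fintype α] [Fintype β] {d₁ d₂ a θ U : ℝ}

/-- The set of all biregular bipartite graphs between `α` and `β`, as Boolean matrices: the set
`BBG` over arbitrary index types. -/
def biregular (α β : Type*) [Fintype α] [Fintype β] (d₁ d₂ : ℝ) : Finset (α → β → Bool) :=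
  Finset.univ.filter fun X => IsBiregular (entry X) d₁ d₂

/-- The linear function `f_q(X) = ∑ q c X c`: the function `fQ` over arbitrary index types. -/
def linearForm (q : α × β → ℝ) (X : α → β → Bool) : ℝ := ∑ c, q c * entry X c

lemma mem_biregular {X : α → β → Bool} :
    X ∈ biregular α β d₁ d₂ ↔ IsBiregular (entry X) d₁ d₂ := by
  simp [biregular]

lemma BBG_eq_biregular (n m d₁ d₂ : ℕ) : BBG n m d₁ d₂ = biregular (Fin n) (Fin m) d₁ d₂ := by
  ext X
  rw [mem_BBG_iff, mem_biregular]

lemma fQ_eq_linearForm {n m : ℕ} (Q : Matrix (Fin n) (Fin m) ℝ) :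
    fQ Q = linearForm fun c => Q c.1 c.2 := by
  ext X
  exact (Fintype.sum_prod_type fun c : Fin n × Fin m => Q c.1 c.2 * entry X c).symm

variable [Fintype ι] [AddCommGroup ι] {g : ι} {q : α × β → ℝ} {X : α → β → Bool} {e : ι → α × β}

lemma switch_mem_biregular (hg : ∀ i, i = 0 ∨ i = g ∨ i = -g) (hX : X ∈ biregular α β d₁ d₂)
    (h : alternation (entry X) e (crossing g e) ≠ 0) : switch g e X ∈ biregular α β d₁ d₂ :=
  mem_biregular.2 ((mem_biregular.1 hX).entry_switch hg h)

lemma switch_mem_biregular_of_crossing (hg : ∀ i, i = 0 ∨ i = g ∨ i = -g)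
    (hX : X ∈ biregular α β d₁ d₂) (h : alternation (entry X) (crossing g e) e ≠ 0) :
    switch g e X ∈ biregular α β d₁ d₂ := by
  rw [← switch_neg_crossing]
  exact switch_mem_biregular (fun i => by simpa [or_comm] using hg i) hX
    (by rwa [crossing_neg_crossing])

lemma sum_alternation_mul (hg : ∀ i, i = 0 ∨ i = g ∨ i = -g) (e : ι → α × β)
    (w : (α → β → Bool) → ℝ) :
    ∑ X ∈ biregular α β d₁ d₂, alternation (entry X) (crossing g e) e * w X =
      ∑ Y ∈ biregular α β d₁ d₂, alternation (entry Y) e (crossing g e) * w (switch g e Y) := by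
  refine Finset.sum_bij_ne_zero (fun X _ _ => switch g e X) (fun X hX h => ?_)
    (fun X _ _ Y _ _ h => ?_) (fun Y hY h => ⟨switch g e Y, ?_, ?_, ?_⟩) fun X _ _ => ?_
  · exact switch_mem_biregular_of_crossing hg hX (left_ne_zero_of_mul h)
  · rw [← toggle_toggle _ X, ← toggle_toggle _ Y]
    exact congrArg _ h
  · exact switch_mem_biregular hg hY (left_ne_zero_of_mul h)
  · rwa [alternation_crossing_switch]
  · exact toggle_toggle _ Y
  · rw [alternation_switch, switch, toggle_toggle]

lemma linearForm_switch_le (hg : ∀ i, i = 0 ∨ i = g ∨ i = -g) (hq : ∀ c, 0 ≤ q c)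
    (h : alternation (entry X) e (crossing g e) ≠ 0) :
    linearForm q (switch g e X) ≤ linearForm q X + ∑ i, q (e i) := by
  have hsum (p : ι → α × β) : ∑ c, q c * ∑ i, (if p i = c then 1 else 0) = ∑ i, q (p i) := by
    simp only [Finset.mul_sum]
    rw [Finset.sum_comm]
    simp
  simp only [linearForm, entry_switch hg h, mul_sub, mul_add, Finset.sum_sub_distrib,
    Finset.sum_add_distrib, hsum]
  exact sub_le_self _ (Finset.sum_nonneg fun i _ => hq _)

lemma exp_mul_linearForm_switch_le (hg : ∀ i, i = 0 ∨ i = g ∨ i = -g)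
    (hq : ∀ c, q c ∈ Set.Icc 0 a) (ha : 0 < a) (hθ : 0 ≤ θ)
    (he : alternation (entry X) e (crossing g e) ≠ 0) :
    Real.exp (θ * linearForm q (switch g e X)) ≤
      (1 + (∑ i, q (e i)) *
        ((Real.exp (Fintype.card ι * a * θ) - 1) / (Fintype.card ι * a))) *
          Real.exp (θ * linearForm q X) := by
  have hcard : (0 : ℝ) < Fintype.card ι := by exact_mod_cast Fintype.card_pos_iff.2 ⟨0⟩
  have hsum_nonneg : 0 ≤ ∑ i, q (e i) := Finset.sum_nonneg fun i _ => (hq _).1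
  have hsum_le : ∑ i, q (e i) ≤ Fintype.card ι * a := by
    simpa using Finset.sum_le_sum fun i (_ : i ∈ Finset.univ) => (hq (e i)).2
  calc Real.exp (θ * linearForm q (switch g e X))
      ≤ Real.exp (θ * ∑ i, q (e i) + θ * linearForm q X) := by
        rw [← mul_add, add_comm]
        gcongr
        exact linearForm_switch_le hg (fun c => (hq c).1) he
    _ ≤ _ := by
        rw [Real.exp_add, mul_comm _ θ]
        gcongr
        exact exp_mul_le_one_add hsum_nonneg hsum_le (mul_pos hcard ha)

variable [DecidableEq ι]

lemma sum_mul_sum_filter_apply_zero (q : α × β → ℝ) (F : (ι → α × β) → ℝ) :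
    ∑ c, q c * ∑ e with e 0 = c, F e = ∑ e, q (e 0) * F e := by
  rw [← Finset.sum_fiberwise Finset.univ fun e : ι → α × β => e 0]
  refine Finset.sum_congr rfl fun c _ => ?_
  rw [Finset.mul_sum]
  exact Finset.sum_congr rfl fun e he => by rw [(Finset.mem_filter.1 he).2]

lemma sum_mul_insertionCount (q x : α × β → ℝ) :
    ∑ c, q c * insertionCount g x c = ∑ e, q (e 0) * alternation x e (crossing g e) :=
  sum_mul_sum_filter_apply_zero q _

lemma sum_mul_deletionCount (q x : α × β → ℝ) :
    ∑ c, q c * deletionCount g x c = ∑ e, q (e 0) * alternation x (crossing g e) e :=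
  sum_mul_sum_filter_apply_zero q _

lemma sum_deletionCount_mul (hg : ∀ i, i = 0 ∨ i = g ∨ i = -g) (q : α × β → ℝ)
    (w : (α → β → Bool) → ℝ) :
    ∑ X ∈ biregular α β d₁ d₂, (∑ c, q c * deletionCount g (entry X) c) * w X =
      ∑ Y ∈ biregular α β d₁ d₂,
        ∑ e, q (e 0) * alternation (entry Y) e (crossing g e) * w (switch g e Y) := by
  simp only [sum_mul_deletionCount, Finset.sum_mul, mul_assoc]
  rw [Finset.sum_comm, Finset.sum_comm (t := Finset.univ)]
  simp only [← Finset.mul_sum, sum_alternation_mul hg]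

lemma sum_mul_alternation_eq_sum_mul_insertionCount (q x : α × β → ℝ) (i : ι) :
    ∑ e, q (e i) * alternation x e (crossing g e) = ∑ c, q c * insertionCount g x c := by
  rw [sum_mul_insertionCount]
  refine Fintype.sum_equiv ((Equiv.addRight (-i)).arrowCongr (Equiv.refl _)) _ _ fun e => ?_
  have hshift : (Equiv.addRight (-i)).arrowCongr (Equiv.refl (α × β)) e = fun j => e (j + i) := by
    ext j <;> simp
  simp only [hshift, alternation_comp_add_right, zero_add]

lemma sum_mul_sum_mul_alternation_le (hins : ∀ c, insertionCount g (entry X) c ≤ U) :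
    ∑ e : ι → α × β, q (e 0) * (∑ i, q (e i)) * alternation (entry X) e (crossing g e) ≤
      Fintype.card ι * U * ∑ c, q c ^ 2 := by
  set A : (ι → α × β) → ℝ := fun e => alternation (entry X) e (crossing g e)
  have hA (e) : 0 ≤ A e := alternation_nonneg (entry_nonneg X) (entry_le_one X) _ _
  have hsq (i : ι) : ∑ e, q (e i) ^ 2 * A e ≤ U * ∑ c, q c ^ 2 := by
    rw [sum_mul_alternation_eq_sum_mul_insertionCount (fun c => q c ^ 2), mul_comm, Finset.sum_mul]
    exact Finset.sum_le_sum fun c _ => mul_le_mul_of_nonneg_left (hins c) (sq_nonneg _)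
  calc ∑ e, q (e 0) * (∑ i, q (e i)) * A e
      = ∑ i, ∑ e, q (e 0) * q (e i) * A e := by
        simp only [Finset.mul_sum, Finset.sum_mul]
        exact Finset.sum_comm
    _ ≤ ∑ i, ∑ e, (q (e 0) ^ 2 * A e + q (e i) ^ 2 * A e) / 2 := by
        refine Finset.sum_le_sum fun i _ => Finset.sum_le_sum fun e _ => ?_
        nlinarith [mul_nonneg (sq_nonneg (q (e 0) - q (e i))) (hA e)]
    _ ≤ ∑ _i : ι, U * ∑ c, q c ^ 2 := by
        refine Finset.sum_le_sum fun i _ => ?_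
        rw [← Finset.sum_div, Finset.sum_add_distrib]
        linarith [hsq 0, hsq i]
    _ = Fintype.card ι * U * ∑ c, q c ^ 2 := by
        rw [Finset.sum_const, Finset.card_univ, nsmul_eq_mul, mul_assoc]

lemma sum_alternation_mul_exp_switch_le (hg : ∀ i, i = 0 ∨ i = g ∨ i = -g)
    (hq : ∀ c, q c ∈ Set.Icc 0 a) (ha : 0 < a) (hθ : 0 ≤ θ)
    (hins : ∀ c, insertionCount g (entry X) c ≤ U) :
    ∑ e : ι → α × β, q (e 0) * alternation (entry X) e (crossing g e) *
        Real.exp (θ * linearForm q (switch g e X)) ≤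
      (∑ c, q c * insertionCount g (entry X) c +
        U * ((Real.exp (Fintype.card ι * a * θ) - 1) / a) * ∑ c, q c ^ 2) *
          Real.exp (θ * linearForm q X) := by
  set A : (ι → α × β) → ℝ := fun e => alternation (entry X) e (crossing g e)
  set E := (Real.exp (Fintype.card ι * a * θ) - 1) / (Fintype.card ι * a)
  have hA (e) : 0 ≤ A e := alternation_nonneg (entry_nonneg X) (entry_le_one X) _ _
  have hE : 0 ≤ E :=
    div_nonneg (sub_nonneg.2 (Real.one_le_exp (by positivity))) (by positivity)
  calc ∑ e, q (e 0) * A e * Real.exp (θ * linearForm q (switch g e X))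
      ≤ ∑ e, q (e 0) * A e * ((1 + (∑ i, q (e i)) * E) * Real.exp (θ * linearForm q X)) := by
        refine Finset.sum_le_sum fun e _ => ?_
        by_cases he : A e = 0
        · simp [he]
        · exact mul_le_mul_of_nonneg_left (exp_mul_linearForm_switch_le hg hq ha hθ he)
            (mul_nonneg (hq _).1 (hA e))
    _ = (∑ e, q (e 0) * A e + E * ∑ e, q (e 0) * (∑ i, q (e i)) * A e) *
          Real.exp (θ * linearForm q X) := by
        rw [Finset.mul_sum, ← Finset.sum_add_distrib, Finset.sum_mul]
        exact Finset.sum_congr rfl fun e _ => by ring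
    _ ≤ _ := by
        rw [← sum_mul_insertionCount]
        refine mul_le_mul_of_nonneg_right (add_le_add le_rfl ?_) (Real.exp_pos _).le
        refine (mul_le_mul_of_nonneg_left (sum_mul_sum_mul_alternation_le hins) hE).trans_eq ?_
        simp only [E]
        field_simp

lemma le_sum_alternation_mul_exp_neg_switch (hg : ∀ i, i = 0 ∨ i = g ∨ i = -g)
    (hq : ∀ c, 0 ≤ q c) (hθ : 0 ≤ θ) (hins : ∀ c, insertionCount g (entry X) c ≤ U) :
    (∑ c, q c * insertionCount g (entry X) c - θ * (Fintype.card ι * U * ∑ c, q c ^ 2)) *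
        Real.exp (-(θ * linearForm q X)) ≤
      ∑ e : ι → α × β, q (e 0) * alternation (entry X) e (crossing g e) *
        Real.exp (-(θ * linearForm q (switch g e X))) := by
  set A : (ι → α × β) → ℝ := fun e => alternation (entry X) e (crossing g e)
  have hA (e) : 0 ≤ A e := alternation_nonneg (entry_nonneg X) (entry_le_one X) _ _
  have hstep (e : ι → α × β) (he : A e ≠ 0) :
      (1 - θ * ∑ i, q (e i)) * Real.exp (-(θ * linearForm q X)) ≤
        Real.exp (-(θ * linearForm q (switch g e X))) :=
    calc (1 - θ * ∑ i, q (e i)) * Real.exp (-(θ * linearForm q X))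
        ≤ Real.exp (-(θ * ∑ i, q (e i))) * Real.exp (-(θ * linearForm q X)) := by
          gcongr
          exact Real.one_sub_le_exp_neg _
      _ ≤ Real.exp (-(θ * linearForm q (switch g e X))) := by
          rw [← Real.exp_add, ← neg_add, ← mul_add, add_comm]
          gcongr
          exact linearForm_switch_le hg hq he
  calc _ ≤ (∑ e, q (e 0) * A e - θ * ∑ e, q (e 0) * (∑ i, q (e i)) * A e) *
          Real.exp (-(θ * linearForm q X)) := by
        rw [← sum_mul_insertionCount]
        gcongr
        exact sum_mul_sum_mul_alternation_le hins
    _ = ∑ e, q (e 0) * A e * ((1 - θ * ∑ i, q (e i)) * Real.exp (-(θ * linearForm q X))) := by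
        rw [Finset.mul_sum, ← Finset.sum_sub_distrib, Finset.sum_mul]
        exact Finset.sum_congr rfl fun e _ => by ring
    _ ≤ ∑ e, q (e 0) * A e * Real.exp (-(θ * linearForm q (switch g e X))) := by
        refine Finset.sum_le_sum fun e _ => ?_
        by_cases he : A e = 0
        · simp [he]
        · exact mul_le_mul_of_nonneg_left (hstep e he) (mul_nonneg (hq _) (hA e))

variable {K L M : ℝ}

lemma mul_linearForm (L : ℝ) (q : α × β → ℝ) (X : α → β → Bool) :
    L * linearForm q X = ∑ c, q c * (L * entry X c) := by
  simp only [linearForm, Finset.mul_sum, mul_left_comm]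

lemma mul_linearForm_add_sum (L : ℝ) (q f : α × β → ℝ) (X : α → β → Bool) :
    L * linearForm q X + ∑ c, q c * f c = ∑ c, q c * (L * entry X c + f c) := by
  simp only [mul_linearForm, mul_add, Finset.sum_add_distrib]

/-- The double count: a switching is counted at its result on the left and at its origin on the
right. -/
lemma sum_mul_entry_add_deletionCount_mul (hg : ∀ i, i = 0 ∨ i = g ∨ i = -g) (L : ℝ)
    (q : α × β → ℝ) (w : (α → β → Bool) → ℝ) :
    ∑ X ∈ biregular α β d₁ d₂,
        (∑ c, q c * (L * entry X c + deletionCount g (entry X) c)) * w X =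
      ∑ X ∈ biregular α β d₁ d₂, (L * linearForm q X * w X +
        ∑ e, q (e 0) * alternation (entry X) e (crossing g e) * w (switch g e X)) := by
  simp only [← mul_linearForm_add_sum, add_mul, Finset.sum_add_distrib, sum_deletionCount_mul hg]

lemma mul_sum_linearForm_mul_exp_le (hg : ∀ i, i = 0 ∨ i = g ∨ i = -g)
    (hq : ∀ c, q c ∈ Set.Icc 0 a) (ha : 0 < a) (hθ : 0 ≤ θ) (hL : 0 ≤ L)
    (hdel : ∀ X ∈ biregular α β d₁ d₂, ∀ c,
      K * entry X c ≤ L * entry X c + deletionCount g (entry X) c)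
    (hins : ∀ X ∈ biregular α β d₁ d₂, ∀ c,
      L * entry X c + insertionCount g (entry X) c ≤ M) :
    K * ∑ X ∈ biregular α β d₁ d₂, linearForm q X * Real.exp (θ * linearForm q X) ≤
      M * (∑ c, q c + (Real.exp (Fintype.card ι * a * θ) - 1) / a * ∑ c, q c ^ 2) *
        ∑ X ∈ biregular α β d₁ d₂, Real.exp (θ * linearForm q X) := by
  have hstep (X) (hX : X ∈ biregular α β d₁ d₂) :
      L * linearForm q X * Real.exp (θ * linearForm q X) +
          ∑ e, q (e 0) * alternation (entry X) e (crossing g e) *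
            Real.exp (θ * linearForm q (switch g e X)) ≤
        M * (∑ c, q c + (Real.exp (Fintype.card ι * a * θ) - 1) / a * ∑ c, q c ^ 2) *
          Real.exp (θ * linearForm q X) := by
    have hU (c) : insertionCount g (entry X) c ≤ M :=
      (le_add_of_nonneg_left (mul_nonneg hL (entry_nonneg X c))).trans (hins X hX c)
    have hM : L * linearForm q X + ∑ c, q c * insertionCount g (entry X) c ≤ M * ∑ c, q c := by
      rw [mul_linearForm_add_sum, mul_comm, Finset.sum_mul]
      exact Finset.sum_le_sum fun c _ => mul_le_mul_of_nonneg_left (hins X hX c) (hq c).1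
    linarith [sum_alternation_mul_exp_switch_le hg hq ha hθ hU,
      mul_le_mul_of_nonneg_right hM (Real.exp_pos (θ * linearForm q X)).le]
  calc _ = ∑ X ∈ biregular α β d₁ d₂,
          (∑ c, q c * (K * entry X c)) * Real.exp (θ * linearForm q X) := by
        simp only [← mul_linearForm, mul_assoc, Finset.mul_sum]
    _ ≤ ∑ X ∈ biregular α β d₁ d₂, (∑ c, q c * (L * entry X c + deletionCount g (entry X) c)) *
          Real.exp (θ * linearForm q X) := by
        gcongr with X hX c
        · exact (hq c).1
        · exact hdel X hX c
    _ ≤ _ := by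
        rw [sum_mul_entry_add_deletionCount_mul hg L q, Finset.mul_sum]
        exact Finset.sum_le_sum hstep

lemma le_mul_sum_linearForm_mul_exp_neg (hg : ∀ i, i = 0 ∨ i = g ∨ i = -g)
    (hq : ∀ c, 0 ≤ q c) (hθ : 0 ≤ θ)
    (hdel : ∀ X ∈ biregular α β d₁ d₂, ∀ c,
      L * entry X c + deletionCount g (entry X) c ≤ K * entry X c)
    (hins : ∀ X ∈ biregular α β d₁ d₂, ∀ c,
      M ≤ L * entry X c + insertionCount g (entry X) c)
    (hU : ∀ X ∈ biregular α β d₁ d₂, ∀ c, insertionCount g (entry X) c ≤ U) :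
    (M * ∑ c, q c - θ * (Fintype.card ι * U * ∑ c, q c ^ 2)) *
        ∑ X ∈ biregular α β d₁ d₂, Real.exp (-(θ * linearForm q X)) ≤
      K * ∑ X ∈ biregular α β d₁ d₂, linearForm q X * Real.exp (-(θ * linearForm q X)) := by
  have hstep (X) (hX : X ∈ biregular α β d₁ d₂) :
      (M * ∑ c, q c - θ * (Fintype.card ι * U * ∑ c, q c ^ 2)) *
          Real.exp (-(θ * linearForm q X)) ≤
        L * linearForm q X * Real.exp (-(θ * linearForm q X)) +
          ∑ e, q (e 0) * alternation (entry X) e (crossing g e) *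
            Real.exp (-(θ * linearForm q (switch g e X))) := by
    have hM : M * ∑ c, q c ≤ L * linearForm q X + ∑ c, q c * insertionCount g (entry X) c := by
      rw [mul_linearForm_add_sum, mul_comm, Finset.sum_mul]
      exact Finset.sum_le_sum fun c _ => mul_le_mul_of_nonneg_left (hins X hX c) (hq c)
    linarith [le_sum_alternation_mul_exp_neg_switch hg hq hθ (hU X hX),
      mul_le_mul_of_nonneg_right hM (Real.exp_pos (-(θ * linearForm q X))).le]
  calc _ ≤ ∑ X ∈ biregular α β d₁ d₂, (∑ c, q c * (L * entry X c + deletionCount g (entry X) c)) *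
          Real.exp (-(θ * linearForm q X)) := by
        rw [sum_mul_entry_add_deletionCount_mul hg L q fun X => Real.exp (-(θ * linearForm q X)),
          Finset.mul_sum]
        exact Finset.sum_le_sum hstep
    _ ≤ ∑ X ∈ biregular α β d₁ d₂,
          (∑ c, q c * (K * entry X c)) * Real.exp (-(θ * linearForm q X)) := by
        gcongr with X hX c
        · exact hq c
        · exact hdel X hX c
    _ = _ := by simp only [← mul_linearForm, mul_assoc, Finset.mul_sum]

end Exchange

section Tails

variable {α β : Type*} [Fintype α] [Fintype β] {d₁ d₂ a t : ℝ} {q : α × β → ℝ}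

/-- The mean of `linearForm q` over biregular graphs with degrees `d₁` on the side of `α`: every
cell is occupied with probability `d₁ / card β`. The paper's `μ` and `σ̃²` are its values at `q`
and `q ^ 2`. -/
def meanForm (d₁ : ℝ) (q : α × β → ℝ) : ℝ := d₁ / Fintype.card β * ∑ c, q c

lemma one_sub_div_card_pos (hd₁ : 0 < d₁) (hdm : d₁ < Fintype.card β) :
    0 < 1 - d₁ / Fintype.card β :=
  sub_pos.2 ((div_lt_one (hd₁.trans hdm)).2 hdm)

lemma meanForm_sq_pos (hd₁ : 0 < d₁) (hdm : d₁ < Fintype.card β) (hq0 : q ≠ 0) :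
    0 < meanForm d₁ (q ^ 2) := by
  obtain ⟨c, hc⟩ := Function.ne_iff.1 hq0
  exact mul_pos (div_pos hd₁ (hd₁.trans hdm)) <| Finset.sum_pos' (fun c _ => sq_nonneg (q c))
    ⟨c, Finset.mem_univ c, sq_pos_of_ne_zero hc⟩

lemma sum_linearForm_mul_exp_le (hd₁ : 0 < d₁) (hd₂ : 0 < d₂) (hdm : d₁ < Fintype.card β)
    (ha : 0 < a) (hq : ∀ c, q c ∈ Set.Icc 0 a) {θ : ℝ} (hθ : 0 ≤ θ) :
    ∑ X ∈ biregular α β d₁ d₂, linearForm q X * Real.exp (θ * linearForm q X) ≤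
      (meanForm d₁ q / (1 - d₁ / Fintype.card β) +
        meanForm d₁ (q ^ 2) / ((1 - d₁ / Fintype.card β) * a) * (Real.exp (2 * a * θ) - 1)) *
          ∑ X ∈ biregular α β d₁ d₂, Real.exp (θ * linearForm q X) := by
  have hs : 0 < d₂ * (Fintype.card β - d₁) := mul_pos hd₂ (sub_pos.2 hdm)
  have hdd : 0 < d₁ * d₂ := mul_pos hd₁ hd₂
  have key := mul_sum_linearForm_mul_exp_le (α := α) (d₁ := d₁) (d₂ := d₂)
    (K := d₂ * (Fintype.card β - d₁)) (M := d₁ * d₂) (g := (1 : Fin 2)) (by decide) hq ha hθ hdd.le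
    (fun X hX c => by linarith [(mem_biregular.1 hX).le_deletionCount_fin_two c])
    (fun X hX c => by linarith [(mem_biregular.1 hX).insertionCount_fin_two_le c])
  rw [← le_div_iff₀' hs] at key
  refine key.trans_eq ?_
  have hm : (Fintype.card β : ℝ) ≠ 0 := (hd₁.trans hdm).ne'
  have hmd : (Fintype.card β : ℝ) - d₁ ≠ 0 := (sub_pos.2 hdm).ne'
  rw [Fintype.card_fin, Nat.cast_ofNat, mul_div_right_comm, meanForm, meanForm]
  simp only [Pi.pow_apply]
  congr 1
  field_simp

lemma sum_neg_linearForm_mul_exp_le (hd₁ : 0 < d₁) (hd₂ : 0 < d₂) (hdm : d₁ < Fintype.card β)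
    (hq : ∀ c, 0 ≤ q c) {θ : ℝ} (hθ : 0 ≤ θ) :
    ∑ X ∈ biregular α β d₁ d₂, -linearForm q X * Real.exp (θ * -linearForm q X) ≤
      (-((1 - d₁ / (Fintype.card β - d₁)) * meanForm d₁ q) + 3 * meanForm d₁ (q ^ 2) * θ) *
        ∑ X ∈ biregular α β d₁ d₂, Real.exp (θ * -linearForm q X) := by
  have hm : 0 < (Fintype.card β : ℝ) := hd₁.trans hdm
  have hs : 0 < d₂ * (Fintype.card β - d₁) := mul_pos hd₂ (sub_pos.2 hdm)
  have key := le_mul_sum_linearForm_mul_exp_neg (α := α) (d₁ := d₁) (d₂ := d₂)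
    (K := d₂ * (Fintype.card β - d₁) * (Fintype.card β * d₂))
    (L := d₁ * d₂ * (d₂ * (Fintype.card β - d₁)))
    (M := d₁ * d₂ * (d₂ * (Fintype.card β - d₁) - d₁ * d₂)) (g := (1 : Fin 3)) (by decide) hq hθ
    (fun X hX c => by linarith [(mem_biregular.1 hX).deletionCount_fin_three_le c])
    (fun X hX c => by
      linarith [(mem_biregular.1 hX).le_insertionCount_fin_three c,
        mul_nonneg (entry_nonneg X c) (sq_nonneg (d₁ * d₂))])
    (fun X hX c => (mem_biregular.1 hX).insertionCount_fin_three_le c)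
  rw [← div_le_iff₀' (mul_pos hs (mul_pos hm hd₂))] at key
  simp only [mul_neg, neg_mul, Finset.sum_neg_distrib]
  rw [neg_le]
  refine key.trans_eq' ?_
  have hmd : (Fintype.card β : ℝ) - d₁ ≠ 0 := (sub_pos.2 hdm).ne'
  rw [Fintype.card_fin, Nat.cast_ofNat, mul_div_right_comm, meanForm, meanForm, ← neg_mul]
  simp only [Pi.pow_apply]
  congr 1
  field_simp
  ring

lemma card_filter_meanForm_div_add_le_linearForm (hd₁ : 0 < d₁) (hd₂ : 0 < d₂)
    (hdm : d₁ < Fintype.card β) (hne : (biregular α β d₁ d₂).Nonempty) (ha : 0 < a)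
    (hq : ∀ c, q c ∈ Set.Icc 0 a) (hq0 : q ≠ 0) (ht : 0 ≤ t) :
    (((biregular α β d₁ d₂).filter fun X =>
        meanForm d₁ q / (1 - d₁ / Fintype.card β) + t ≤ linearForm q X).card : ℝ) /
        (biregular α β d₁ d₂).card ≤
      Real.exp (-(meanForm d₁ (q ^ 2) / (2 * (1 - d₁ / Fintype.card β) * a ^ 2)) *
        hfun ((1 - d₁ / Fintype.card β) * a * t / meanForm d₁ (q ^ 2))) := by
  have hp := one_sub_div_card_pos hd₁ hdm
  have hσ := meanForm_sq_pos hd₁ hdm hq0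
  refine (card_filter_div_card_le_exp_hfun hne (div_pos hσ (mul_pos hp ha))
    (mul_pos two_pos ha) (fun θ hθ => sum_linearForm_mul_exp_le hd₁ hd₂ hdm ha hq hθ)
    ht).trans_eq ?_
  congr 2
  · field_simp
  · congr 1
    field_simp

lemma card_filter_linearForm_le_mul_meanForm_sub (hd₁ : 0 < d₁) (hd₂ : 0 < d₂)
    (hdm : d₁ < Fintype.card β) (hne : (biregular α β d₁ d₂).Nonempty)
    (hq : ∀ c, 0 ≤ q c) (hq0 : q ≠ 0) (ht : 0 ≤ t) :
    (((biregular α β d₁ d₂).filter fun X =>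
        linearForm q X ≤ (1 - d₁ / (Fintype.card β - d₁)) * meanForm d₁ q - t).card : ℝ) /
        (biregular α β d₁ d₂).card ≤
      Real.exp (-(t ^ 2 / (6 * meanForm d₁ (q ^ 2)))) := by
  refine (congrArg (fun k : ℕ => (k : ℝ) / (biregular α β d₁ d₂).card)
    (congrArg Finset.card (Finset.filter_congr fun X _ => ?_))).trans_le
    ((card_filter_div_card_le_exp_neg_sq hne
      (mul_pos three_pos (meanForm_sq_pos hd₁ hdm hq0))
      (fun θ hθ => sum_neg_linearForm_mul_exp_le hd₁ hd₂ hdm hq hθ) ht).trans_eq ?_)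
  · constructor <;> intro h <;> linarith
  · congr 3
    ring

end Tails

theorem linear_function_tail_bounds (n m d₁ d₂ : ℕ)
    (hn : 0 < n) (hm : 0 < m) (hd₁ : 0 < d₁) (hd₂ : 0 < d₂)
    (hbal : n * d₁ = m * d₂) (hne : (BBG n m d₁ d₂).Nonempty)
    (hdm : d₁ < m)
    (a : ℝ) (ha : 0 < a)
    (Q : Matrix (Fin n) (Fin m) ℝ) (hQ : ∀ u v, Q u v ∈ Set.Icc (0 : ℝ) a)
    (hQ0 : Q ≠ 0)
    (μ σ2 p p' : ℝ)
    (hμ : μ = (d₁ : ℝ) / m * ∑ u, ∑ v, Q u v)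
    (hσ : σ2 = (d₁ : ℝ) / m * ∑ u, ∑ v, (Q u v) ^ 2)
    (hp : p = 1 - (d₁ : ℝ) / m)
    (hp' : p' = 1 - (d₁ : ℝ) / ((m : ℝ) - d₁))
    (t : ℝ) (ht : 0 ≤ t) :
    ((((BBG n m d₁ d₂).filter fun X => t ≤ fQ Q X - μ / p).card : ℝ) /
        ((BBG n m d₁ d₂).card : ℝ)
      ≤ Real.exp (-(σ2 / (3 * p * a ^ 2)) * hfun (p * a * t / σ2))) ∧
    ((((BBG n m d₁ d₂).filter fun X => fQ Q X - p' * μ ≤ -t).card : ℝ) /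
        ((BBG n m d₁ d₂).card : ℝ)
      ≤ Real.exp (-(σ2 / (3 * a ^ 2)) * hfun (a * t / σ2))) := by
  set q : Fin n × Fin m → ℝ := fun c => Q c.1 c.2
  have hq0 : q ≠ 0 := fun h => hQ0 (funext₂ fun u v => congrFun h (u, v))
  have hdm : (d₁ : ℝ) < Fintype.card (Fin m) := by simpa using hdm
  have hd₁ : (0 : ℝ) < d₁ := Nat.cast_pos.2 hd₁
  have hd₂ : (0 : ℝ) < d₂ := Nat.cast_pos.2 hd₂
  have hμ : μ = meanForm d₁ q := by simp [hμ, meanForm, Fintype.sum_prod_type, q]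
  have hσ : σ2 = meanForm d₁ (q ^ 2) := by simp [hσ, meanForm, Fintype.sum_prod_type, q]
  have hσpos : 0 < σ2 := hσ ▸ meanForm_sq_pos hd₁ hdm hq0
  have hppos : 0 < p := by simpa [hp] using one_sub_div_card_pos hd₁ hdm
  rw [BBG_eq_biregular] at hne ⊢
  have hupper := card_filter_meanForm_div_add_le_linearForm hd₁ hd₂ hdm hne ha
    (fun c => hQ c.1 c.2) hq0 ht
  have hlower := card_filter_linearForm_le_mul_meanForm_sub hd₁ hd₂ hdm hne
    (fun c => (hQ c.1 c.2).1) hq0 ht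
  rw [Fintype.card_fin, ← hμ, ← hσ, ← hp] at hupper
  rw [Fintype.card_fin, ← hμ, ← hσ, ← hp'] at hlower
  simp only [fQ_eq_linearForm, le_sub_iff_add_le']
  simp only [sub_le_iff_le_add', ← sub_eq_add_neg]
  refine ⟨hupper.trans (Real.exp_le_exp.2 ?_), hlower.trans (Real.exp_le_exp.2 ?_)⟩
  · refine mul_le_mul_of_nonneg_right (neg_le_neg ?_) (hfun_nonneg (by positivity))
    gcongr
    norm_num
  · rw [neg_mul]
    exact neg_le_neg (div_mul_hfun_le_sq_div ha hσpos ht)
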